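/- Let q be a prime power, r ≥ 1, n ≥ 1, and set s = n·(q^r - 1)/(q - 1). Let N be an r×s matrix over 𝔽_q such that for every 1-dimensional linear subspace L of (𝔽_q)^r, exactly n columns of N are nonzero vectors lying in L (i.e., N consists of n representatives of each point of the projective space P^(r-1)(𝔽_q)). Then for every 0 ≤ k ≤ r with s ≥ r-k ≥ 1 and every r×s matrix M over 𝔽_q of rank r, the k-dependence of M is at least the k-dependence of N. -/

import Mathlib

open Classical in
/-- The `k`-dependence of an `r × s` matrix over a field `F`, where `m = r - k`:
the proportion of `m`-element subsets of the columns that are linearly dependent. -/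
noncomputable def matKDep {F : Type} [Field F] {r s : ℕ}
    (M : Matrix (Fin r) (Fin s) F) (m : ℕ) : ℚ :=
  ((((Finset.univ : Finset (Fin s)).powersetCard m).filter
      (fun S => ¬ LinearIndependent F (fun i : {x : Fin s // x ∈ S} => M.transpose i.1))).card : ℚ)
    / (s.choose m)

/-- tangent line inequality -/
theorem aux_amgm (z : ℝ) (hz : 0 ≤ z) (k : ℕ) :
    ((k:ℝ)+2) * z^(k+1) ≤ (k+1) * z^(k+2) + 1 := by
  induction k with
  | zero => norm_num; nlinarith [sq_nonneg (z-1)]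
  | succ k ih =>
    push_cast
    have h1 : ((k:ℝ)+2) * z^(k+2) ≤ (k+1) * z^(k+3) + z := by
      have := mul_le_mul_of_nonneg_right ih hz
      calc _ = ((k:ℝ)+2) * z^(k+1) * z := by ring
        _ ≤ _ := this
        _ = _ := by ring
    have h2 : 0 ≤ (z^(k+2) - 1) * (z - 1) := by
      rcases le_total z 1 with h | h
      · have := pow_le_one₀ (n := k+2) hz h
        nlinarith
      · have := one_le_pow₀ (n := k+2) h
        nlinarith
    have e : (z^(k+2) - 1) * (z - 1) = z^(k+3) - z^(k+2) - z + 1 := by ring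
    rw [e] at h2
    have e1 : k+1+1 = k+2 := rfl
    have e2 : k+1+2 = k+3 := rfl
    rw [e1, e2]
    linarith

theorem aux_tangent (y y0 : ℝ) (hy : 0 ≤ y) (hy0 : 0 < y0) (k : ℕ)
    (h : (k:ℝ)+1 ≤ y0 * (k+2)) :
    y^(k+1) * (1-y) ≤ y0^k * ((k+1)*(1-y0)^2 + ((k+2)*y0 - (k+1)) * (1-y)) := by
  obtain ⟨z, rfl⟩ : ∃ z, y = y0 * z := ⟨y / y0, by field_simp⟩
  have hz : 0 ≤ z := by
    by_contra hc
    push Not at hc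
    nlinarith
  have h1 := aux_amgm z hz k
  have h2 : 1 + ((k+2 : ℕ):ℝ) * (z-1) ≤ (1 + (z-1))^(k+2) :=
    one_add_mul_le_pow (by linarith) _
  push_cast at h2
  have e : (1 + (z-1)) = z := by ring
  rw [e] at h2
  have h3 : ((k:ℝ)+2) * ((z^(k+1) - 1 - (k+1)*(z-1)) - y0 * (z^(k+2) - 1 - (k+2)*(z-1))) ≤ 0 := by
    nlinarith [mul_nonneg (sub_nonneg.2 h) (sub_nonneg.2 h2)]
  have h4 : (z^(k+1) - 1 - (k+1)*(z-1)) - y0 * (z^(k+2) - 1 - (k+2)*(z-1)) ≤ 0 := by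
    by_contra hc
    push Not at hc
    have : (0:ℝ) < (k:ℝ)+2 := by positivity
    nlinarith [mul_pos this hc]
  have h5 : y0^(k+1) * ((z^(k+1) - 1 - (k+1)*(z-1)) - y0 * (z^(k+2) - 1 - (k+2)*(z-1))) ≤ 0 :=
    mul_nonpos_of_nonneg_of_nonpos (by positivity) h4
  rw [mul_pow]
  have : y0^(k+1) * z^(k+1) * (1 - y0*z) - y0^k * ((k+1)*(1-y0)^2 + ((k+2)*y0 - (k+1)) * (1-y0*z))
    = y0^(k+1) * ((z^(k+1) - 1 - (k+1)*(z-1)) - y0 * (z^(k+2) - 1 - (k+2)*(z-1))) := by ring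
  linarith

theorem aux_sum {ι : Type} (T : Finset ι) (w : ι → ℝ) (P : ℝ) (m : ℕ) (hP : (m:ℝ)+1 ≤ P)
    (hw1 : ∀ i ∈ T, 1 ≤ w i) (hw2 : ∀ i ∈ T, w i ≤ T.card) (hs : ∑ i ∈ T, (w i)⁻¹ ≤ P) :
    ∑ i ∈ T, ((T.card : ℝ) - w i)^m ≤ (T.card:ℝ)^(m+1) * (1 - P⁻¹)^m := by
  cases m with
  | zero => simp
  | succ k =>
    rcases T.eq_empty_or_nonempty with rfl | hT
    · simp
    set t : ℝ := (T.card : ℝ) with ht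
    have htp : 0 < t := by rw [ht]; exact_mod_cast hT.card_pos
    push_cast at hP
    have hP0 : 0 < P := by have : (0:ℝ) ≤ k := by positivity
                           linarith
    set y0 := 1 - P⁻¹ with hy0
    have hx : y0 * P = P - 1 := by rw [hy0]; field_simp
    have hk0 : (0:ℝ) ≤ k := by positivity
    have hy0p : 0 < y0 := by
      by_contra hc
      push Not at hc
      nlinarith
    have hyk : (k:ℝ)+1 ≤ y0 * (k+2) := by
      have : P⁻¹ * (k+2) ≤ 1 := by
        rw [inv_mul_le_iff₀ hP0]; linarith
      rw [hy0]; nlinarith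
    have key : ∀ i ∈ T, (t - w i)^(k+1) ≤
        t^(k+1) * (y0^k * ((k+1)*(1-y0)^2 * t * (w i)⁻¹ + ((k+2)*y0 - (k+1)))) := by
      intro i hi
      have hwp : 0 < w i := by linarith [hw1 i hi]
      have h := aux_tangent (1 - w i / t) y0 (by rw [sub_nonneg, div_le_one htp]; exact hw2 i hi)
        hy0p k hyk
      have e : 1 - (1 - w i / t) = w i / t := by ring
      rw [e] at h
      have e2 : (t - w i)^(k+1) = t^(k+1) * (1 - w i / t)^(k+1) := by
        rw [← mul_pow]; congr 1; field_simp
      rw [e2]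
      apply mul_le_mul_of_nonneg_left _ (by positivity)
      have e3 := mul_le_mul_of_nonneg_right h (show 0 ≤ t * (w i)⁻¹ by positivity)
      have e4 : w i / t * (t * (w i)⁻¹) = 1 := by field_simp
      have e8 : (1 - w i / t)^(k+1) * (w i / t) * (t * (w i)⁻¹) = (1 - w i / t)^(k+1) := by
        rw [mul_assoc, e4, mul_one]
      rw [e8] at e3
      refine e3.trans_eq ?_
      linear_combination (y0^k * ((k+2)*y0 - (k+1))) * e4
    refine (Finset.sum_le_sum key).trans ?_
    rw [← Finset.mul_sum, ← Finset.mul_sum, Finset.sum_add_distrib, ← Finset.mul_sum,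
      Finset.sum_const, nsmul_eq_mul, ← ht]
    have e5 : t^(k+1+1) * y0^(k+1) = t^(k+1) * (y0^k * (t * y0)) := by ring
    rw [e5]
    apply mul_le_mul_of_nonneg_left _ (by positivity)
    apply mul_le_mul_of_nonneg_left _ (by positivity)
    have e6 : (1-y0) = P⁻¹ := by rw [hy0]; ring
    have e7 : (1 - y0)^2 * P = 1 - y0 := by rw [e6]; field_simp
    have h8 : ((k:ℝ)+1)*(1-y0)^2 * t * ∑ i ∈ T, (w i)⁻¹ ≤ (k+1)*(1-y0)^2 * t * P :=
      mul_le_mul_of_nonneg_left hs (by positivity)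
    have e9 : ((k:ℝ)+1)*(1-y0)^2 * t * P = (k+1) * t * (1 - y0) := by
      linear_combination ((k:ℝ)+1) * t * e7
    nlinarith

section lin
open Classical

variable {F : Type} [Field F] [Fintype F] {ι : Type} [Fintype ι]

/-- number of independent ordered tuples -/
noncomputable def indCount {V : Type} [AddCommGroup V] [Module F V] (v : ι → V) (m : ℕ) : ℕ :=
  (Finset.univ.filter (fun x : Fin m → ι => LinearIndependent F (v ∘ x))).card

theorem span_symm {V : Type} [AddCommGroup V] [Module F V] {a b : V} (ha : a ≠ 0)
    (h : a ∈ Submodule.span F {b}) : b ∈ Submodule.span F {a} := by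
  obtain ⟨c, rfl⟩ := Submodule.mem_span_singleton.1 h
  have hc : c ≠ 0 := by rintro rfl; simp at ha
  exact Submodule.mem_span_singleton.2 ⟨c⁻¹, by rw [smul_smul, inv_mul_cancel₀ hc, one_smul]⟩

theorem card_sub {V : Type} [AddCommGroup V] [Module F V] [Fintype V] (W : Submodule F V) :
    ((Finset.univ.filter (fun u : V => u ≠ 0 ∧ u ∈ W)).card : ℝ)
      = (Fintype.card F : ℝ)^(Module.finrank F W) - 1 := by
  have h1 : (Finset.univ.filter (fun u : V => u ≠ 0 ∧ u ∈ W)) =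
      (Finset.univ.filter (fun u : V => u ∈ W)).erase 0 := by
    ext u; simp
  have h2 : (Finset.univ.filter (fun u : V => u ∈ W)).card = (Fintype.card F)^(Module.finrank F W) := by
    rw [← Module.card_eq_pow_finrank (K := F) (V := W)]
    exact (Fintype.card_subtype _).symm
  rw [h1, Finset.cast_card_erase_of_mem (by simp), h2]
  simp

theorem card_line {V : Type} [AddCommGroup V] [Module F V] [Fintype V] {a : V} (ha : a ≠ 0) :
    ((Finset.univ.filter (fun u : V => u ≠ 0 ∧ u ∈ Submodule.span F {a})).card : ℝ)
      = (Fintype.card F : ℝ) - 1 := by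
  rw [card_sub, finrank_span_singleton ha, pow_one]

theorem indCount_succ {V : Type} [AddCommGroup V] [Module F V] (v : ι → V) (m : ℕ) :
    indCount (F := F) v (m+1) = ∑ i, (Finset.univ.filter (fun x : Fin m → ι =>
      LinearIndependent F (v ∘ x) ∧ v i ∉ Submodule.span F (Set.range (v ∘ x)))).card := by
  unfold indCount
  simp only [Finset.card_filter]
  rw [← (Fin.consEquiv (fun _ : Fin (m+1) => ι)).sum_comp, Fintype.sum_prod_type]
  refine Finset.sum_congr rfl fun i _ => Finset.sum_congr rfl fun x _ => ?_
  have : v ∘ (Fin.consEquiv (fun _ : Fin (m+1) => ι)) (i, x) = Fin.cons (v i) (v ∘ x) := by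
    ext j
    refine Fin.cases ?_ (fun j => ?_) j <;> simp [Fin.consEquiv]
  rw [this]
  simp only [linearIndependent_finCons]

/-- the projective density -/
noncomputable def cc (q : ℝ) (d m : ℕ) : ℝ := ∏ i ∈ Finset.range m, (q^d - q^i)/(q^d-1)

theorem cc_succ (q : ℝ) (hq : 1 < q) (d m : ℕ) (hm : m ≤ d) :
    cc q d m * ((q^(d+1) - q)/(q^(d+1)-1))^m = cc q (d+1) (m+1) := by
  have hne : q^(d+1) - 1 ≠ 0 := by
    have := one_lt_pow₀ hq (n := d+1) (by omega)
    linarith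
  unfold cc
  rw [Finset.prod_range_succ', pow_zero, div_self hne, mul_one]
  rw [← Finset.card_range m, ← Finset.prod_const, Finset.card_range, ← Finset.prod_mul_distrib]
  refine Finset.prod_congr rfl fun i hi => ?_
  have hd : d ≠ 0 := by have := Finset.mem_range.1 hi; omega
  have hne' : q^d - 1 ≠ 0 := by
    have := one_lt_pow₀ hq hd
    linarith
  field_simp
  ring

theorem cc_nonneg (q : ℝ) (hq : 1 < q) (d m : ℕ) (hm : m ≤ d) : 0 ≤ cc q d m := by
  refine Finset.prod_nonneg fun i hi => ?_
  have := Finset.mem_range.1 hi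
  have h1 := one_le_pow₀ hq.le (n := d)
  have h2 := pow_le_pow_right₀ hq.le (show i ≤ d by omega)
  exact div_nonneg (by linarith) (by linarith)

theorem sum_inv_le {V : Type} [AddCommGroup V] [Module F V] [Fintype V] (v : ι → V) :
    ((Fintype.card F : ℝ) - 1) * ∑ i ∈ Finset.univ.filter (fun i => v i ≠ 0),
      (((Finset.univ.filter (fun j => v j ≠ 0 ∧ v j ∈ Submodule.span F {v i})).card : ℝ))⁻¹
      ≤ (Fintype.card F : ℝ)^(Module.finrank F V) - 1 := by
  set w : V → ℝ := fun u =>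
    ((Finset.univ.filter (fun j => v j ≠ 0 ∧ v j ∈ Submodule.span F {u})).card : ℝ) with hw
  have hwe : ∀ a b : V, a ≠ 0 → a ∈ Submodule.span F {b} → w a = w b := by
    intro a b ha hab
    have : Submodule.span F {a} = Submodule.span F {b} := by
      apply le_antisymm
      · rw [Submodule.span_singleton_le_iff_mem]; exact hab
      · rw [Submodule.span_singleton_le_iff_mem]; exact span_symm ha hab
    simp only [hw, this]
  rw [Finset.mul_sum]
  have h1 : ∀ i ∈ Finset.univ.filter (fun i => v i ≠ 0), ((Fintype.card F : ℝ) - 1) * (w (v i))⁻¹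
      = ∑ u : V, if u ≠ 0 ∧ u ∈ Submodule.span F {v i} then (w u)⁻¹ else 0 := by
    intro i hi
    rw [← card_line (F := F) (Finset.mem_filter.1 hi).2, ← Finset.sum_filter, ← nsmul_eq_mul,
      ← Finset.sum_const]
    refine Finset.sum_congr rfl fun u hu => ?_
    have := (Finset.mem_filter.1 hu).2
    rw [hwe u (v i) this.1 this.2]
  rw [Finset.sum_congr rfl h1, Finset.sum_comm]
  have h2 : ∀ u : V, ∑ i ∈ Finset.univ.filter (fun i => v i ≠ 0),
      (if u ≠ 0 ∧ u ∈ Submodule.span F {v i} then (w u)⁻¹ else 0) ≤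
      if u ≠ 0 ∧ u ∈ (⊤ : Submodule F V) then 1 else 0 := by
    intro u
    by_cases hu : u = 0
    · simp [hu]
    · simp only [ne_eq, hu, not_false_eq_true, true_and, Submodule.mem_top, if_true]
      rw [← Finset.sum_filter, Finset.sum_const, nsmul_eq_mul, Finset.filter_filter]
      have : (Finset.univ.filter (fun i => v i ≠ 0 ∧ u ∈ Submodule.span F {v i})) =
        (Finset.univ.filter (fun j => v j ≠ 0 ∧ v j ∈ Submodule.span F {u})) := by
        ext j
        simp only [Finset.mem_filter, Finset.mem_univ, true_and]
        exact and_congr_right fun hj => ⟨span_symm hu, span_symm hj⟩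
      have e : (((Finset.univ.filter (fun i => v i ≠ 0 ∧ u ∈ Submodule.span F {v i})).card : ℕ) : ℝ) = w u := by
        rw [this]
      exact (congrArg (· * (w u)⁻¹) e).trans_le mul_inv_le_one
  refine (Finset.sum_le_sum fun u _ => h2 u).trans ?_
  rw [Finset.sum_boole, card_sub, finrank_top]

theorem upper (m : ℕ) : ∀ (V : Type) [AddCommGroup V] [Module F V] [Fintype V] (v : ι → V),
    m ≤ Module.finrank F V → (indCount (F := F) v m : ℝ) ≤
      cc (Fintype.card F) (Module.finrank F V) m *
        ((Finset.univ.filter (fun i => v i ≠ 0)).card : ℝ)^m := by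
  induction m with
  | zero =>
    intro V _ _ _ v _
    simp only [indCount, cc, Finset.range_zero, Finset.prod_empty, pow_zero, mul_one]
    have : (Finset.univ.filter (fun x : Fin 0 → ι => LinearIndependent F (v ∘ x))).card ≤ 1 := by
      refine (Finset.card_filter_le _ _).trans ?_
      simp
    exact_mod_cast this
  | succ m ih =>
    intro V _ _ _ v hd
    obtain ⟨d, hdd⟩ : ∃ d, Module.finrank F V = d + 1 := ⟨Module.finrank F V - 1, by omega⟩
    have hmd : m ≤ d := by omega
    set q : ℝ := (Fintype.card F : ℝ) with hqdef
    have hq : 1 < q := by rw [hqdef]; exact_mod_cast Fintype.one_lt_card (α := F)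
    set T := Finset.univ.filter (fun i => v i ≠ 0) with hT
    set w : ι → ℝ := fun i => ((Finset.univ.filter
      (fun j => v j ≠ 0 ∧ v j ∈ Submodule.span F {v i})).card : ℝ) with hw
    have step : ∀ i ∈ T, ((Finset.univ.filter (fun x : Fin m → ι =>
      LinearIndependent F (v ∘ x) ∧ v i ∉ Submodule.span F (Set.range (v ∘ x)))).card : ℝ) ≤
        cc q d m * ((T.card : ℝ) - w i)^m := by
      intro i hi
      have hi0 : v i ≠ 0 := (Finset.mem_filter.1 hi).2
      set L := Submodule.span F {v i} with hL
      have hfr : Module.finrank F (V ⧸ L) = d := by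
        have := Submodule.finrank_quotient_add_finrank L
        rw [hL, finrank_span_singleton hi0] at this
        rw [hL]; omega
      have h := ih (V ⧸ L) (L.mkQ ∘ v) (by omega)
      rw [hfr] at h
      have hle : (Finset.univ.filter (fun x : Fin m → ι =>
        LinearIndependent F (v ∘ x) ∧ v i ∉ Submodule.span F (Set.range (v ∘ x)))).card ≤
          indCount (F := F) (L.mkQ ∘ v) m := by
        unfold indCount
        refine Finset.card_le_card fun x hx => ?_
        simp only [Finset.mem_filter, Finset.mem_univ, true_and] at hx ⊢
        rw [Function.comp_assoc]
        refine hx.1.map ?_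
        rw [Submodule.ker_mkQ, hL, Submodule.disjoint_span_singleton' hi0]
        exact hx.2
      have hcard : ((Finset.univ.filter (fun j => (L.mkQ ∘ v) j ≠ 0)).card : ℝ) = T.card - w i := by
        rw [eq_sub_iff_add_eq, hT]
        simp only [hw]
        norm_cast
        rw [← Finset.card_union_of_disjoint]
        · congr 1
          ext j
          simp only [Finset.mem_union, Finset.mem_filter, Finset.mem_univ, true_and,
            Function.comp, Submodule.mkQ_apply, ne_eq, Submodule.Quotient.mk_eq_zero]
          constructor
          · rintro (h | h)
            · intro h0; rw [h0] at h; exact h L.zero_mem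
            · exact h.1
          · intro h
            by_cases hh : v j ∈ L
            · exact Or.inr ⟨h, hh⟩
            · exact Or.inl hh
        · rw [Finset.disjoint_left]
          intro j hj hj'
          simp only [Finset.mem_filter, Finset.mem_univ, true_and,
            Function.comp, Submodule.mkQ_apply, ne_eq, Submodule.Quotient.mk_eq_zero] at hj hj'
          exact hj hj'.2
      rw [hcard] at h
      exact (Nat.cast_le.2 hle).trans h
    have hz : ∀ i ∉ T, ((Finset.univ.filter (fun x : Fin m → ι =>
      LinearIndependent F (v ∘ x) ∧ v i ∉ Submodule.span F (Set.range (v ∘ x)))).card : ℝ) = 0 := by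
      intro i hi
      have hi0 : v i = 0 := by simpa [hT] using hi
      simp [hi0]
    have hqd : (1:ℝ) < q^(d+1) := one_lt_pow₀ hq (by omega)
    rw [indCount_succ, Nat.cast_sum, ← Finset.sum_subset (Finset.subset_univ T) (fun i _ hi => hz i hi)]
    refine (Finset.sum_le_sum step).trans ?_
    rw [← Finset.mul_sum, hdd, ← cc_succ q hq d m hmd, mul_assoc]
    refine mul_le_mul_of_nonneg_left ?_ (cc_nonneg q hq d m hmd)
    have hP := aux_sum T w ((q^(d+1)-1)/(q-1)) m ?_ ?_ ?_ ?_
    · refine hP.trans_eq ?_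
      rw [mul_comm]
      congr 2
      have : q^(d+1) - 1 ≠ 0 := by linarith
      have : q - 1 ≠ 0 := by linarith
      field_simp
      ring
    · rw [le_div_iff₀ (by linarith)]
      have := one_add_mul_le_pow (a := q - 1) (by linarith) (d+1)
      have e : 1 + (q-1) = q := by ring
      rw [e] at this
      push_cast at this
      have hmd' : (m:ℝ) ≤ d := by exact_mod_cast hmd
      nlinarith
    · intro i hi
      simp only [hw]
      norm_cast
      refine Finset.card_pos.2 ⟨i, ?_⟩
      simp only [Finset.mem_filter, Finset.mem_univ, true_and]
      exact ⟨(Finset.mem_filter.1 hi).2, Submodule.mem_span_singleton_self _⟩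
    · intro i hi
      simp only [hw]
      norm_cast
      refine Finset.card_le_card fun j hj => ?_
      simp only [hT, Finset.mem_filter, Finset.mem_univ, true_and] at hj ⊢
      exact hj.1
    · rw [le_div_iff₀ (by linarith), mul_comm, ← hdd]
      exact sum_inv_le v

theorem uniform_sub {V : Type} [AddCommGroup V] [Module F V] [Fintype V] (v : ι → V) (n : ℕ)
    (hN : ∀ L : Submodule F V, Module.finrank F L = 1 →
      (Finset.univ.filter (fun j => v j ≠ 0 ∧ v j ∈ L)).card = n) (W : Submodule F V) :
    ((Fintype.card F : ℝ) - 1) * ((Finset.univ.filter (fun j => v j ≠ 0 ∧ v j ∈ W)).card : ℝ)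
      = n * ((Fintype.card F : ℝ)^(Module.finrank F W) - 1) := by
  rw [← card_sub, mul_comm, mul_comm (n:ℝ), ← nsmul_eq_mul, ← Finset.sum_const, ← nsmul_eq_mul,
    ← Finset.sum_const]
  have h1 : ∀ j ∈ Finset.univ.filter (fun j => v j ≠ 0 ∧ v j ∈ W), ((Fintype.card F : ℝ) - 1)
      = ∑ u ∈ Finset.univ.filter (fun u : V => u ≠ 0 ∧ u ∈ W),
        if u ∈ Submodule.span F {v j} then 1 else 0 := by
    intro j hj
    have hj := (Finset.mem_filter.1 hj).2
    rw [← card_line (F := F) hj.1, Finset.sum_boole, Finset.filter_filter]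
    congr 2
    ext u
    simp only [Finset.mem_filter, Finset.mem_univ, true_and]
    have : u ∈ Submodule.span F {v j} → u ∈ W := fun h =>
      (Submodule.span_singleton_le_iff_mem _ _).2 hj.2 h
    tauto
  have h2 : ∀ u ∈ Finset.univ.filter (fun u : V => u ≠ 0 ∧ u ∈ W), (n:ℝ) =
      ∑ j ∈ Finset.univ.filter (fun j => v j ≠ 0 ∧ v j ∈ W),
        if u ∈ Submodule.span F {v j} then 1 else 0 := by
    intro u hu
    have hu := (Finset.mem_filter.1 hu).2
    rw [← hN (Submodule.span F {u}) (finrank_span_singleton hu.1), Finset.sum_boole,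
      Finset.filter_filter]
    congr 2
    ext j
    simp only [Finset.mem_filter, Finset.mem_univ, true_and]
    have : v j ∈ Submodule.span F {u} → v j ∈ W := fun h =>
      (Submodule.span_singleton_le_iff_mem _ _).2 hu.2 h
    constructor
    · rintro ⟨a, b⟩
      exact ⟨⟨a, this b⟩, span_symm a b⟩
    · rintro ⟨⟨a, c⟩, b⟩
      exact ⟨a, span_symm hu.1 b⟩
  rw [Finset.sum_congr rfl h1, Finset.sum_congr rfl h2, Finset.sum_comm]

theorem uniform_count {V : Type} [AddCommGroup V] [Module F V] [Fintype V] (v : ι → V) (n : ℕ)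
    (hN : ∀ L : Submodule F V, Module.finrank F L = 1 →
      (Finset.univ.filter (fun j => v j ≠ 0 ∧ v j ∈ L)).card = n) (m : ℕ) :
    (indCount (F := F) v m : ℝ) = ∏ i ∈ Finset.range m,
      (n * ((Fintype.card F : ℝ)^(Module.finrank F V) - (Fintype.card F : ℝ)^i) /
        ((Fintype.card F : ℝ) - 1)) := by
  have hq : (1:ℝ) < Fintype.card F := by exact_mod_cast Fintype.one_lt_card (α := F)
  have hq' : (Fintype.card F : ℝ) - 1 ≠ 0 := by linarith
  induction m with
  | zero => 
    simp [indCount]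
  | succ m ih =>
    rw [Finset.prod_range_succ, ← ih, indCount_succ]
    have : ∑ i, (Finset.univ.filter (fun x : Fin m → ι =>
      LinearIndependent F (v ∘ x) ∧ v i ∉ Submodule.span F (Set.range (v ∘ x)))).card =
      ∑ x ∈ Finset.univ.filter (fun x : Fin m → ι => LinearIndependent F (v ∘ x)),
        (Finset.univ.filter (fun i => v i ∉ Submodule.span F (Set.range (v ∘ x)))).card := by
      simp only [Finset.card_filter]
      rw [Finset.sum_comm, Finset.sum_filter]
      refine Finset.sum_congr rfl fun x _ => ?_
      split_ifs with h <;> simp [h]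
    rw [this, indCount, Nat.cast_sum, ← nsmul_eq_mul, ← Finset.sum_const]
    refine Finset.sum_congr rfl fun x hx => ?_
    have hx : LinearIndependent F (v ∘ x) := (Finset.mem_filter.1 hx).2
    set W := Submodule.span F (Set.range (v ∘ x)) with hW
    have hfr : Module.finrank F W = m := by
      rw [hW, finrank_span_eq_card hx, Fintype.card_fin]
    have h1 := uniform_sub v n hN W
    have h2 := uniform_sub v n hN ⊤
    rw [finrank_top] at h2
    rw [hfr] at h1
    have h3 : ((Finset.univ.filter (fun i => v i ∉ W)).card : ℝ) +
        (Finset.univ.filter (fun j => v j ≠ 0 ∧ v j ∈ W)).card =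
        (Finset.univ.filter (fun j => v j ≠ 0 ∧ v j ∈ (⊤ : Submodule F V))).card := by
      norm_cast
      rw [← Finset.card_union_of_disjoint]
      · congr 1
        ext j
        simp only [Finset.mem_union, Finset.mem_filter, Finset.mem_univ, true_and,
          Submodule.mem_top, and_true]
        constructor
        · rintro (h | h)
          · intro h0; rw [h0] at h; exact h W.zero_mem
          · exact h.1
        · intro h
          by_cases hh : v j ∈ W
          · exact Or.inr ⟨h, hh⟩
          · exact Or.inl hh
      · rw [Finset.disjoint_left]
        intro j hj hj'
        simp only [Finset.mem_filter, Finset.mem_univ, true_and] at hj hj'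
        exact hj hj'.2
    rw [eq_div_iff hq']
    linear_combination ((Fintype.card F : ℝ) - 1) * h3 + h2 - h1

theorem indCount_eq {V : Type} [AddCommGroup V] [Module F V] (v : ι → V) (m : ℕ) :
    indCount (F := F) v m = m.factorial * (((Finset.univ : Finset ι).powersetCard m).filter
      (fun S => LinearIndependent F (fun i : {x : ι // x ∈ S} => v i.1))).card := by
  set A := ((Finset.univ : Finset ι).powersetCard m).filter
      (fun S => LinearIndependent F (fun i : {x : ι // x ∈ S} => v i.1)) with hA
  have hmaps : ∀ x ∈ Finset.univ.filter (fun x : Fin m → ι => LinearIndependent F (v ∘ x)),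
      Finset.univ.image x ∈ A := by
    intro x hx
    have hx : LinearIndependent F (v ∘ x) := (Finset.mem_filter.1 hx).2
    have hinj : Function.Injective x := hx.injective.of_comp
    simp only [hA, Finset.mem_filter, Finset.mem_powersetCard, Finset.subset_univ, true_and]
    refine ⟨by rw [Finset.card_image_of_injective _ hinj]; simp, ?_⟩
    let e : Fin m ≃ {a // a ∈ Finset.univ.image x} :=
      Equiv.ofBijective (fun i => ⟨x i, by simp⟩) ⟨fun a b h => hinj (by simpa using h), by
        rintro ⟨a, ha⟩
        obtain ⟨i, -, rfl⟩ := Finset.mem_image.1 ha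
        exact ⟨i, rfl⟩⟩
    rw [← linearIndependent_equiv e]
    exact hx
  unfold indCount
  rw [Finset.card_eq_sum_card_fiberwise hmaps, mul_comm, ← smul_eq_mul, ← Finset.sum_const]
  refine Finset.sum_congr rfl fun S hS => ?_
  simp only [hA, Finset.mem_filter, Finset.mem_powersetCard, Finset.subset_univ, true_and] at hS
  have e0 : Fin m ≃ {a // a ∈ S} := Fintype.equivOfCardEq (by simp [hS.1])
  have : Fintype.card (Fin m ≃ {a // a ∈ S}) = m.factorial := by
    rw [Fintype.card_equiv e0, Fintype.card_fin]
  rw [← this, ← Finset.card_univ]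
  symm
  refine Finset.card_bij (fun e _ => fun i => (e i : ι)) ?_ ?_ ?_
  · intro e _
    simp only [Finset.mem_filter, Finset.mem_univ, true_and]
    refine ⟨(linearIndependent_equiv e).2 hS.2, ?_⟩
    ext a
    simp only [Finset.mem_image, Finset.mem_univ, true_and]
    constructor
    · rintro ⟨i, rfl⟩; exact (e i).2
    · intro ha; exact ⟨e.symm ⟨a, ha⟩, by simp⟩
  · intro e _ e' _ h
    ext i
    exact congrFun h i
  · intro x hx
    simp only [Finset.mem_filter, Finset.mem_univ, true_and] at hx
    have hinj : Function.Injective x := hx.1.injective.of_comp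
    refine ⟨Equiv.ofBijective (fun i => ⟨x i, by rw [← hx.2]; simp⟩)
      ⟨fun a b h => hinj (by simpa using h), ?_⟩, Finset.mem_univ _, rfl⟩
    rintro ⟨a, ha⟩
    rw [← hx.2] at ha
    obtain ⟨i, -, rfl⟩ := Finset.mem_image.1 ha
    exact ⟨i, rfl⟩

end lin

open Classical in
theorem stmt6 (q : ℕ) (hq : IsPrimePow q) (F : Type) [Field F] [Fintype F]
    (hF : Fintype.card F = q) (r n s : ℕ) (hr : 1 ≤ r) (hn : 1 ≤ n)
    (hs : s * (q - 1) = n * (q ^ r - 1))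
    (N : Matrix (Fin r) (Fin s) F)
    (hN : ∀ L : Submodule F (Fin r → F), Module.finrank F L = 1 →
      (Finset.univ.filter
        (fun j : Fin s => N.transpose j ≠ 0 ∧ N.transpose j ∈ L)).card = n) :
    ∀ k : ℕ, k ≤ r → 1 ≤ r - k → r - k ≤ s →
      ∀ M : Matrix (Fin r) (Fin s) F, M.rank = r →
        matKDep N (r - k) ≤ matKDep M (r - k) := by
  intro k _ _ _ M _
  have hmr : r - k ≤ r := Nat.sub_le _ _
  generalize r - k = m at *
  subst hF
  have hq1 : (1:ℝ) < Fintype.card F := by exact_mod_cast Fintype.one_lt_card (α := F)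
  have hfr : Module.finrank F (Fin r → F) = r := by simp
  have hcount : indCount (F := F) M.transpose m ≤ indCount (F := F) N.transpose m := by
    have h1 := upper (F := F) m (Fin r → F) M.transpose (by rw [hfr]; exact hmr)
    have h2 := uniform_count (F := F) N.transpose n hN m
    rw [hfr] at h1 h2
    have hs' : (s:ℝ) * ((Fintype.card F : ℝ) - 1) = n * ((Fintype.card F : ℝ)^r - 1) := by
      have := congrArg (Nat.cast : ℕ → ℝ) hs
      rw [Nat.cast_mul, Nat.cast_mul, Nat.cast_sub Fintype.card_pos,
        Nat.cast_sub (Nat.one_le_pow _ _ Fintype.card_pos)] at this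
      simpa using this
    have h3 : cc (Fintype.card F) r m * (s:ℝ)^m = indCount (F := F) N.transpose m := by
      rw [h2, cc]
      conv_lhs => rw [← Finset.card_range m, ← Finset.prod_const, Finset.card_range,
        ← Finset.prod_mul_distrib]
      refine Finset.prod_congr rfl fun i _ => ?_
      have ha : (Fintype.card F : ℝ) - 1 ≠ 0 := by linarith
      have hb : (Fintype.card F : ℝ)^r - 1 ≠ 0 := by
        have := one_lt_pow₀ hq1 (show r ≠ 0 by omega)
        linarith
      rw [div_mul_eq_mul_div, div_eq_div_iff hb ha]
      linear_combination ((Fintype.card F : ℝ)^r - (Fintype.card F : ℝ)^i) * hs'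
    have h4 : ((Finset.univ.filter (fun i => M.transpose i ≠ 0)).card : ℝ) ≤ s := by
      have := Finset.card_filter_le Finset.univ (fun i => M.transpose i ≠ 0)
      rw [Finset.card_univ, Fintype.card_fin] at this
      exact_mod_cast this
    have h5 := h1.trans (mul_le_mul_of_nonneg_left (pow_le_pow_left₀ (by positivity) h4 m)
      (cc_nonneg _ hq1 r m hmr))
    rw [h3] at h5
    exact_mod_cast h5
  have hcount' := (indCount_eq (F := F) M.transpose m).symm.le.trans
    (hcount.trans (indCount_eq (F := F) N.transpose m).le)
  have hc := Nat.le_of_mul_le_mul_left hcount' (Nat.factorial_pos m)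
  have hM := Finset.card_filter_add_card_filter_not (s := (Finset.univ : Finset (Fin s)).powersetCard m)
    (fun S => LinearIndependent F (fun i : {x : Fin s // x ∈ S} => M.transpose i.1))
  have hNN := Finset.card_filter_add_card_filter_not (s := (Finset.univ : Finset (Fin s)).powersetCard m)
    (fun S => LinearIndependent F (fun i : {x : Fin s // x ∈ S} => N.transpose i.1))
  unfold matKDep
  refine div_le_div_of_nonneg_right ?_ (by positivity)
  norm_cast
  omega
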